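/- Suppose: (i) the error bound |f_ℓ(y) − m_ℓ(y)| ≤ ε·Δ² holds for all ℓ = 1,…,k and all y ∈ B (full linearity), with ε > 0; (ii) a step s with x₀ + s ∈ B satisfies the sufficient decrease Φ_m(x₀) − Φ_m(x₀ + s) ≥ κ·ω̃_m·min{ ω̃_m/(c·H_ub), Δ } > 0, where ω̃_m := min{ω_m(x₀), 1} > 0, κ ∈ (0,1), and c·H_ub > 1; and (iii) Δ ≤ κ·(1 − ν)·ω̃_m/(2λ) with λ := max{ε, c·H_ub} and ν ∈ (0,1). Then the acceptance ratio ρ := (Φ(x₀) − Φ(x₀+s))/(Φ_m(x₀) − Φ_m(x₀+s)) satisfies |ρ − 1| ≤ 1 − ν, and in particular ρ ≥ ν. (Lemma 6.7: sufficiently small trust regions with fully linear models yield successful iterations.) -/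

import Mathlib

noncomputable section

/-- The ℓ^∞ (maximum) norm on Euclidean space. -/
def supNorm {n : ℕ} (v : EuclideanSpace ℝ (Fin n)) : ℝ :=
  ‖(WithLp.equiv 2 (Fin n → ℝ)) v‖

/-- The multiobjective criticality measure
`ω_g(x) = − inf { max_ℓ ⟨∇g_ℓ(x), d⟩ : x + d ∈ X, ‖d‖_∞ ≤ 1 }`. -/
def omega {n k : ℕ} (X : Set (EuclideanSpace ℝ (Fin n)))
    (g : Fin k → EuclideanSpace ℝ (Fin n) → ℝ) (x : EuclideanSpace ℝ (Fin n)) : ℝ :=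
  - sInf ((fun d => ⨆ ℓ, fderiv ℝ (g ℓ) x d) ''
      {d : EuclideanSpace ℝ (Fin n) | x + d ∈ X ∧ supNorm d ≤ 1})

/-- Frobenius norm of the Hessian of `g : ℝⁿ → ℝ` at `x`. -/
def frobHess {n : ℕ} (g : EuclideanSpace ℝ (Fin n) → ℝ)
    (x : EuclideanSpace ℝ (Fin n)) : ℝ :=
  Real.sqrt (∑ i : Fin n, ∑ j : Fin n,
    (fderiv ℝ (fun y => fderiv ℝ g y (EuclideanSpace.single j (1:ℝ))) x
      (EuclideanSpace.single i (1:ℝ))) ^ 2)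

/-!
The maximum of a family is 1-Lipschitz in the uniform distance, so full linearity at the two
endpoints makes the actual and the predicted decrease differ by at most `2 ε Δ²`. The term
`c · H_ub` of `λ` makes the radius so small that the minimum in the sufficient decrease condition
is `Δ`, i.e. the predicted decrease is at least `κ ω̃_m Δ`; the term `ε` gives
`2 ε Δ ≤ κ (1 - ν) ω̃_m`. Hence the error is at most `1 - ν` times the predicted decrease.
-/

section Supremum

variable {ι G : Type*} [Nonempty ι] [ConditionallyCompleteLinearOrder G] [AddCommGroup G]
  [IsOrderedAddMonoid G] {a b : ι → G} {r : G}

lemma ciSup_le_ciSup_add (hb : BddAbove (Set.range b)) (h : ∀ i, a i ≤ b i + r) :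
    ⨆ i, a i ≤ (⨆ i, b i) + r :=
  ciSup_le fun i => (h i).trans (by gcongr; exact le_ciSup hb i)

lemma abs_ciSup_sub_ciSup_le (hb : BddAbove (Set.range b)) (h : ∀ i, |a i - b i| ≤ r) :
    |(⨆ i, a i) - ⨆ i, b i| ≤ r := by
  have hab (i : ι) : a i ≤ b i + r := sub_le_iff_le_add'.1 (abs_sub_le_iff.1 (h i)).1
  have hba (i : ι) : b i ≤ a i + r := sub_le_iff_le_add'.1 (abs_sub_le_iff.1 (h i)).2
  have ha : BddAbove (Set.range a) := by
    obtain ⟨M, hM⟩ := hb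
    refine ⟨M + r, Set.forall_mem_range.2 fun i => (hab i).trans ?_⟩
    gcongr
    exact hM (Set.mem_range_self i)
  exact abs_sub_le_iff.2 ⟨sub_le_iff_le_add'.2 (ciSup_le_ciSup_add hb hab),
    sub_le_iff_le_add'.2 (ciSup_le_ciSup_add ha hba)⟩

end Supremum

section AcceptanceRatio

variable {K E : Type*} [Field K]

/-- The acceptance ratio `ρ` of a trust region step from `x` to `y`: the decrease of the objective
`F` divided by the decrease predicted by its model `M`. It has the junk value `0` when the model
predicts no change. -/
def acceptanceRatio (F M : E → K) (x y : E) : K :=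
  (F x - F y) / (M x - M y)

variable [LinearOrder K] [IsStrictOrderedRing K]

lemma abs_div_sub_one_le_iff {a b t : K} (hb : 0 < b) : |a / b - 1| ≤ t ↔ |a - b| ≤ t * b := by
  rw [div_sub_one hb.ne', abs_div, abs_of_pos hb, div_le_iff₀ hb]

lemma abs_acceptanceRatio_sub_one_le {F M : E → K} {x y : E} {δ t : K}
    (hx : |F x - M x| ≤ δ) (hy : |F y - M y| ≤ δ) (hM : 0 < M x - M y)
    (hδ : 2 * δ ≤ t * (M x - M y)) :
    |acceptanceRatio F M x y - 1| ≤ t :=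
  (abs_div_sub_one_le_iff hM).2 <| calc
    |F x - F y - (M x - M y)| = |F x - M x - (F y - M y)| := by rw [sub_sub_sub_comm]
    _ ≤ |F x - M x| + |F y - M y| := abs_sub _ _
    _ ≤ 2 * δ := by linarith
    _ ≤ t * (M x - M y) := hδ

end AcceptanceRatio

section Radius

variable {K : Type*} [Field K] [LinearOrder K] [IsStrictOrderedRing K] {Δ ε η : K}

lemma two_mul_mul_le_of_le_div_two_mul_max {a : K} (hΔ₀ : 0 ≤ Δ) (hη : 0 < η)
    (hΔ : Δ ≤ a / (2 * max ε η)) : 2 * ε * Δ ≤ a := by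
  have hmax : 0 < max ε η := lt_max_of_lt_right hη
  calc
    2 * ε * Δ ≤ 2 * max ε η * Δ := by gcongr; exact le_max_left ε η
    _ ≤ a := (le_div_iff₀' (mul_pos two_pos hmax)).1 hΔ

lemma le_div_of_le_mul_div_two_mul_max {θ w : K} (hη : 0 < η) (hw : 0 ≤ w) (hθ : θ ≤ 2)
    (hΔ : Δ ≤ θ * w / (2 * max ε η)) : Δ ≤ w / η := by
  have : 0 < max ε η := lt_max_of_lt_right hη
  calc
    Δ ≤ θ * w / (2 * max ε η) := hΔ
    _ ≤ 2 * w / (2 * max ε η) := by gcongr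
    _ = w / max ε η := mul_div_mul_left _ _ two_ne_zero
    _ ≤ w / η := by gcongr; exact le_max_right ε η

end Radius

-- `η` plays the role of `c · H_ub` and `w` that of `ω̃_m`.
theorem small_radius_successful_general {ι E : Type*} [Nonempty ι] {f m : ι → E → ℝ} {x y : E}
    (hmx : BddAbove (Set.range fun i => m i x)) (hmy : BddAbove (Set.range fun i => m i y))
    {Δ ε κ ν w η : ℝ} (hΔ : 0 < Δ) (hκ : κ ∈ Set.Ioc 0 1) (hν : ν ∈ Set.Icc 0 1)
    (hw : 0 < w) (hη : 0 < η)
    (hfmx : ∀ i, |f i x - m i x| ≤ ε * Δ ^ 2) (hfmy : ∀ i, |f i y - m i y| ≤ ε * Δ ^ 2)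
    (hdec : κ * w * min (w / η) Δ ≤ (⨆ i, m i x) - ⨆ i, m i y)
    (hΔsmall : Δ ≤ κ * (1 - ν) * w / (2 * max ε η)) :
    |acceptanceRatio (fun z => ⨆ i, f i z) (fun z => ⨆ i, m i z) x y - 1| ≤ 1 - ν
    ∧ ν ≤ acceptanceRatio (fun z => ⨆ i, f i z) (fun z => ⨆ i, m i z) x y := by
  obtain ⟨hκ₀, hκ₁⟩ := hκ
  obtain ⟨hν₀, hν₁⟩ := hν
  have hκν : κ * (1 - ν) ≤ 1 := mul_le_one₀ hκ₁ (by linarith) (by linarith)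
  have hΔw : Δ ≤ w / η :=
    le_div_of_le_mul_div_two_mul_max hη hw.le (hκν.trans one_le_two) hΔsmall
  rw [min_eq_right hΔw] at hdec
  have hpos : 0 < (⨆ i, m i x) - ⨆ i, m i y := lt_of_lt_of_le (by positivity) hdec
  have herr : 2 * (ε * Δ ^ 2) ≤ (1 - ν) * ((⨆ i, m i x) - ⨆ i, m i y) := calc
    2 * (ε * Δ ^ 2) = 2 * ε * Δ * Δ := by ring
    _ ≤ κ * (1 - ν) * w * Δ :=
      mul_le_mul_of_nonneg_right (two_mul_mul_le_of_le_div_two_mul_max hΔ.le hη hΔsmall) hΔ.le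
    _ = (1 - ν) * (κ * w * Δ) := by ring
    _ ≤ (1 - ν) * ((⨆ i, m i x) - ⨆ i, m i y) :=
      mul_le_mul_of_nonneg_left hdec (sub_nonneg.2 hν₁)
  have hρ : |acceptanceRatio (fun z => ⨆ i, f i z) (fun z => ⨆ i, m i z) x y - 1| ≤ 1 - ν :=
    abs_acceptanceRatio_sub_one_le (abs_ciSup_sub_ciSup_le hmx hfmx)
      (abs_ciSup_sub_ciSup_le hmy hfmy) hpos herr
  exact ⟨hρ, by linarith [neg_le_of_abs_le hρ]⟩

/-- Lemma 6.7: with fully linear models, a sufficient decrease step, and a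
sufficiently small trust region radius, the acceptance ratio
`ρ = (Φ(x₀) − Φ(x₀+s)) / (Φ_m(x₀) − Φ_m(x₀+s))` satisfies `|ρ − 1| ≤ 1 − ν`,
in particular `ρ ≥ ν`, so the iteration is successful. -/
theorem small_radius_successful
    (n k : ℕ) (hk : 1 ≤ k)
    (X : Set (EuclideanSpace ℝ (Fin n)))
    (hXne : X.Nonempty) (hXconv : Convex ℝ X) (hXcomp : IsCompact X)
    (f m : Fin k → EuclideanSpace ℝ (Fin n) → ℝ)
    (U : Set (EuclideanSpace ℝ (Fin n))) (hUopen : IsOpen U) (hXU : X ⊆ U)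
    (hf : ∀ ℓ, ContDiffOn ℝ 1 (f ℓ) U)
    (hm : ∀ ℓ, ContDiffOn ℝ 2 (m ℓ) U)
    (x₀ : EuclideanSpace ℝ (Fin n)) (hx₀ : x₀ ∈ X)
    (Δ : ℝ) (hΔ : 0 < Δ)
    (B : Set (EuclideanSpace ℝ (Fin n))) (hB : B = {y ∈ X | supNorm (y - x₀) ≤ Δ})
    (c : ℝ) (hc : 0 < c)
    (hcn : ∀ v : EuclideanSpace ℝ (Fin n), ‖v‖ ≤ Real.sqrt c * supNorm v)
    (Hub : ℝ) (hHub : 0 < Hub)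
    (hHbound : ∀ ℓ, ∀ x ∈ B, frobHess (m ℓ) x ≤ Hub)
    (hcH : 1 < c * Hub)
    -- (i) full linearity: `|f_ℓ(y) − m_ℓ(y)| ≤ ε·Δ²` on `B`
    (ε : ℝ) (hε : 0 < ε)
    (hfl : ∀ ℓ, ∀ y ∈ B, |f ℓ y - m ℓ y| ≤ ε * Δ ^ 2)
    (ν : ℝ) (hν : ν ∈ Set.Ioo (0:ℝ) 1)
    (κ : ℝ) (hκ : κ ∈ Set.Ioo (0:ℝ) 1)
    (hωpos : 0 < min (omega X m x₀) 1)
    -- (ii) sufficient decrease, with positive right-hand side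
    (s : EuclideanSpace ℝ (Fin n)) (hs : x₀ + s ∈ B)
    (hdec : (⨆ ℓ, m ℓ x₀) - (⨆ ℓ, m ℓ (x₀ + s))
      ≥ κ * min (omega X m x₀) 1 *
        min (min (omega X m x₀) 1 / (c * Hub)) Δ)
    (hdecpos : 0 < κ * min (omega X m x₀) 1 *
        min (min (omega X m x₀) 1 / (c * Hub)) Δ)
    -- (iii) small trust region radius, with `λ = max{ε, c·Hub}`
    (hΔsmall : Δ ≤ κ * (1 - ν) * min (omega X m x₀) 1 / (2 * max ε (c * Hub))) :
    |((⨆ ℓ, f ℓ x₀) - (⨆ ℓ, f ℓ (x₀ + s))) /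
        ((⨆ ℓ, m ℓ x₀) - (⨆ ℓ, m ℓ (x₀ + s))) - 1| ≤ 1 - ν
    ∧ ν ≤ ((⨆ ℓ, f ℓ x₀) - (⨆ ℓ, f ℓ (x₀ + s))) /
        ((⨆ ℓ, m ℓ x₀) - (⨆ ℓ, m ℓ (x₀ + s))) := by
  have : Nonempty (Fin k) := Fin.pos_iff_nonempty.1 hk
  have hx₀B : x₀ ∈ B := hB ▸ ⟨hx₀, by simpa [supNorm] using hΔ.le⟩
  exact small_radius_successful_general (Set.finite_range _).bddAbove (Set.finite_range _).bddAbove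
    hΔ (Set.Ioo_subset_Ioc_self hκ) (Set.Ioo_subset_Icc_self hν) hωpos (mul_pos hc hHub)
    (fun ℓ => hfl ℓ x₀ hx₀B) (fun ℓ => hfl ℓ (x₀ + s) hs) hdec hΔsmall
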